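/- The dimension of the degree-k homogeneous layer of the free Lie algebra on d generators is (1/k) · Σ_{n | k} μ(n) d^{k/n}, where μ is the Möbius function (Witt's formula). -/

import Mathlib

/-!
Order words lexicographically and embed the free Lie algebra into noncommutative polynomials. The
embedding is injective on each layer of positive degree because the Dynkin operator (a word goes to
its right-normed bracket) multiplies the Lie polynomials of degree `k` by `k`. Lie polynomials are
primitive, so they pair to zero with all proper shuffles; since a non-Lyndon word factors as `uv`
with `uv` the largest word in the shuffle of `u` and `v`, the smallest word of a Lie polynomial is
Lyndon. Conversely, bracketing Lyndon words along factorizations `w = lm` with `l < m` both Lyndon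
gives Lie polynomials with smallest word `w`, so the dimension of a layer is the number of Lyndon
words. A Lyndon word of length `m` is the least of the `m` rotations of a primitive word, so the
words of length `k` are counted by `∑ m ∣ k, m * #(Lyndon words of length m)`, and Möbius
inversion concludes.
-/

/-- The span of the generators: the first homogeneous layer of the free Lie algebra
on `d` generators. -/
noncomputable def freeLieGen (d : ℕ) : Submodule ℝ (FreeLieAlgebra ℝ (Fin d)) :=
  Submodule.span ℝ (Set.range (FreeLieAlgebra.of ℝ))

/-- The degree-`k` homogeneous layer of the free Lie algebra on `d` generators:
`L₁` is the span of the generators and `L_{k+1} = [L₁, L_k]`. -/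
noncomputable def freeLieLayer (d : ℕ) : ℕ → Submodule ℝ (FreeLieAlgebra ℝ (Fin d))
  | 0 => ⊥
  | 1 => freeLieGen d
  | (k + 2) => Submodule.span ℝ
      {z | ∃ x ∈ freeLieGen d, ∃ y ∈ freeLieLayer d (k + 1), z = ⁅x, y⁆}

section Words

variable {α : Type*} [LinearOrder α]

theorem append_lt_append_of_length_le {x y : List α} (p q : List α) (h : x < y)
    (hl : y.length ≤ x.length) : x ++ p < y ++ q := by
  induction x generalizing y with
  | nil => simp_all
  | cons a x ih =>
    obtain _ | ⟨b, y⟩ := y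
    · simp at h
    · rw [List.cons_lt_cons_iff] at h
      rw [List.cons_append, List.cons_append, List.cons_lt_cons_iff]
      exact h.imp_right fun ⟨hab, hxy⟩ => ⟨hab, ih hxy (by simpa using hl)⟩

theorem append_left_lt_append_left_iff (p : List α) {x y : List α} :
    p ++ x < p ++ y ↔ x < y := by
  induction p with
  | nil => rfl
  | cons a p ih => simpa using ih

theorem append_left_le_append_left (p : List α) {x y : List α} (h : x ≤ y) :
    p ++ x ≤ p ++ y := by
  simpa only [← not_lt, append_left_lt_append_left_iff] using h

theorem le_append_right_self (p q : List α) : p ≤ p ++ q := by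
  simpa using append_left_le_append_left p (not_lt.1 (List.not_lt_nil q))

theorem isPrefix_or_append_lt_append {x y : List α} (h : x < y) :
    x <+: y ∨ ∀ p q, x ++ p < y ++ q := by
  induction x generalizing y with
  | nil => exact .inl y.nil_prefix
  | cons a x ih =>
    obtain _ | ⟨b, y⟩ := y
    · simp at h
    · obtain hab | ⟨rfl, hxy⟩ := List.cons_lt_cons_iff.1 h
      · exact .inr fun p q => List.cons_lt_cons_iff.2 (.inl hab)
      · refine (ih hxy).imp (fun hp => (List.cons_prefix_cons.2 ⟨rfl, hp⟩)) fun hs p q => ?_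
        exact List.cons_lt_cons_iff.2 (.inr ⟨rfl, hs p q⟩)

/-- A Lyndon word: a nonempty word that is lexicographically smaller than each of its proper
nonempty suffixes. -/
def IsLyndon (w : List α) : Prop :=
  w ≠ [] ∧ ∀ u v, u ≠ [] → v ≠ [] → w = u ++ v → w < v

namespace IsLyndon

theorem singleton (a : α) : IsLyndon [a] := by
  refine ⟨by simp, fun u v hu hv h => ?_⟩
  simp_all [List.singleton_eq_append_iff]

theorem append_lt_append_comm {u v : List α} (h : IsLyndon (u ++ v)) (hu : u ≠ []) (hv : v ≠ []) :
    u ++ v < v ++ u := by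
  simpa using append_lt_append_of_length_le [] u (h.2 u v hu hv rfl) (by simp)

theorem of_forall_lt_append_comm {w : List α} (hw : w ≠ [])
    (h : ∀ u v, u ≠ [] → v ≠ [] → w = u ++ v → w < v ++ u) : IsLyndon w := by
  refine ⟨hw, fun u v hu hv e => lt_of_not_ge fun hle => ?_⟩
  have hlt : v < w := hle.lt_of_ne fun hvw => hu (by simpa [hvw] using e)
  have hrot : w < v ++ u := h u v hu hv e
  obtain ⟨t, rfl⟩ | hs := isPrefix_or_append_lt_append hlt
  · have htu : t < u := (append_left_lt_append_left_iff v).1 hrot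
    have hlen : t.length = u.length := by
      have := congrArg List.length e
      simp only [List.length_append] at this
      omega
    have ht : t ≠ [] := by
      rintro rfl
      simp at hlt
    refine lt_asymm (h v t hv ht rfl) ?_
    rw [e]
    exact append_lt_append_of_length_le v v htu hlen.ge
  · exact lt_asymm hrot (by simpa using hs u [])

theorem append_lt_right {l m : List α} (hl : l ≠ []) (hm : IsLyndon m) (h : l < m) :
    l ++ m < m := by
  obtain ⟨t, rfl⟩ | hs := isPrefix_or_append_lt_append h
  · have ht : t ≠ [] := by
      rintro rfl
      simp at h
    exact (append_left_lt_append_left_iff l).2 (hm.2 l t hl ht rfl)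
  · simpa using hs m []

theorem append {l m : List α} (hl : IsLyndon l) (hm : IsLyndon m) (h : l < m) :
    IsLyndon (l ++ m) := by
  have hlt : l ++ m < m := append_lt_right hl.1 hm h
  refine ⟨by simp [hl.1], fun u v hu hv e => ?_⟩
  obtain ⟨a, rfl, rfl⟩ | ⟨a, rfl, rfl⟩ := List.append_eq_append_iff.1 e <;>
    obtain rfl | ha := eq_or_ne a []
  · simpa using hlt
  · exact hlt.trans (hm.2 a v ha hv rfl)
  · simpa using hlt
  · exact append_lt_append_of_length_le m m (hl.2 u a hu ha rfl) (by simp)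

theorem append_flatten {r : List α} {C : List (List α)} (hr : IsLyndon r)
    (hC : ∀ c ∈ C, IsLyndon c) (h : ∀ c ∈ C, r ++ C.flatten < c) :
    IsLyndon (r ++ C.flatten) := by
  induction C generalizing r with
  | nil => simpa using hr
  | cons c C ih =>
    have hrc : r < c := (le_append_right_self r _).trans_lt (h c (by simp))
    simp only [List.flatten_cons, ← List.append_assoc] at h ⊢
    exact ih (hr.append (hC c (by simp)) hrc) (fun x hx => hC x (by simp [hx]))
      fun x hx => h x (by simp [hx])

end IsLyndon

/-- `F` is the Lyndon factorization of `w`, in the sense of the Chen–Fox–Lyndon theorem: a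
nonincreasing sequence of Lyndon words with concatenation `w`. -/
structure IsLyndonFactorization (F : List (List α)) (w : List α) : Prop where
  sorted : F.Pairwise (· ≥ ·)
  isLyndon : ∀ l ∈ F, IsLyndon l
  flatten_eq : F.flatten = w

namespace IsLyndonFactorization

theorem exists_append {l w : List α} {F : List (List α)} (hl : IsLyndon l)
    (hF : IsLyndonFactorization F w) : ∃ G, IsLyndonFactorization G (l ++ w) := by
  induction F generalizing l w with
  | nil => exact ⟨[l], by simp, by simpa using hl, by simp [← hF.flatten_eq]⟩
  | cons c F ih =>
    obtain ⟨hs, hc, rfl⟩ := hF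
    rw [List.pairwise_cons] at hs
    obtain h | h := lt_or_ge l c
    · obtain ⟨G, hG⟩ := ih (hl.append (hc c (by simp)) h)
        ⟨hs.2, fun m hm => hc m (by simp [hm]), rfl⟩
      exact ⟨G, by simpa using hG⟩
    · refine ⟨l :: c :: F, ?_, ?_, by simp⟩
      · simp only [List.pairwise_cons, List.forall_mem_cons]
        exact ⟨⟨h, fun x hx => (hs.1 x hx).trans h⟩, hs⟩
      · simpa only [List.forall_mem_cons] using ⟨hl, List.forall_mem_cons.1 hc⟩

end IsLyndonFactorization

theorem exists_isLyndonFactorization (w : List α) : ∃ F, IsLyndonFactorization F w := by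
  induction w with
  | nil => exact ⟨[], by simp, by simp, by simp⟩
  | cons a w ih =>
    obtain ⟨F, hF⟩ := ih
    exact hF.exists_append (IsLyndon.singleton a)

theorem IsLyndonFactorization.lt_of_isLyndon_cons {a : α} {w : List α} {C : List (List α)}
    (hC : IsLyndonFactorization C w) (hw : IsLyndon (a :: w)) : ∀ c ∈ C, a :: w < c := by
  obtain ⟨hs, hl, rfl⟩ := hC
  obtain rfl | ⟨B, x, rfl⟩ := C.eq_nil_or_concat'
  · simp
  have hx : a :: (B ++ [x]).flatten < x :=
    hw.2 (a :: B.flatten) x (by simp) (hl x (by simp)).1 (by simp)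
  intro c hc
  obtain hc | hc := List.mem_append.1 hc
  · exact hx.trans_le ((List.pairwise_append.1 hs).2.2 c hc x (by simp))
  · rwa [List.mem_singleton.1 hc]

theorem IsLyndon.eq_singleton_or_exists_append {w : List α} (hw : IsLyndon w) :
    (∃ a, w = [a]) ∨ ∃ l m, IsLyndon l ∧ IsLyndon m ∧ l < m ∧ w = l ++ m := by
  obtain _ | ⟨a, w⟩ := w
  · exact absurd rfl hw.1
  obtain ⟨C, hC⟩ := exists_isLyndonFactorization w
  have hlt := hC.lt_of_isLyndon_cons hw
  obtain ⟨-, hl, rfl⟩ := hC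
  obtain rfl | ⟨B, x, rfl⟩ := C.eq_nil_or_concat'
  · exact .inl ⟨a, rfl⟩
  have hle : a :: B.flatten ≤ a :: (B ++ [x]).flatten := by
    simpa using le_append_right_self (a :: B.flatten) x
  refine .inr ⟨a :: B.flatten, x, ?_, hl x (by simp), hle.trans_lt (hlt x (by simp)), by simp⟩
  exact (IsLyndon.singleton a).append_flatten (fun c hc => hl c (by simp [hc]))
    fun c hc => hle.trans_lt (hlt c (by simp [hc]))

end Words

section Shuffles

variable {α : Type*}

/-- All ways of splitting a word into a subword and its complement, with multiplicity: `z` occurs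
in the shuffle product of `u` and `v` as often as `(u, v)` occurs in `unshuffles z`. -/
def unshuffles : List α → List (List α × List α)
  | [] => [([], [])]
  | a :: z => (unshuffles z).map (Prod.map (a :: ·) id) ++ (unshuffles z).map (Prod.map id (a :: ·))

theorem mem_unshuffles_append (u v : List α) : (u, v) ∈ unshuffles (u ++ v) := by
  induction u with
  | nil =>
    induction v with
    | nil => simp [unshuffles]
    | cons a v ih => simpa [unshuffles] using ih
  | cons a u ih => simpa [unshuffles] using .inl ih

variable [LinearOrder α]

/-- The concatenation of a multiset of words in nonincreasing order. For the disjoint union of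
the Lyndon factors of `u` and of `v`, this is the largest word in the shuffle of `u` and `v`. -/
noncomputable def sortedFlatten (s : Multiset (List α)) : List α :=
  (s.sort (· ≥ ·)).flatten

theorem sortedFlatten_coe {F : List (List α)} (hF : F.Pairwise (· ≥ ·)) :
    sortedFlatten (F : Multiset (List α)) = F.flatten := by
  rw [sortedFlatten, Multiset.coe_sort, List.mergeSort_eq_self]
  simpa using hF

theorem sortedFlatten_cons_of_forall_le {g : List α} {s : Multiset (List α)}
    (h : ∀ x ∈ s, x ≤ g) : sortedFlatten (g ::ₘ s) = g ++ sortedFlatten s := by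
  rw [sortedFlatten, Multiset.sort_cons _ _ _ h, List.flatten_cons, sortedFlatten]

theorem multiset_induction_on_max {β : Type*} [LinearOrder β] {p : Multiset β → Prop}
    (s : Multiset β) (zero : p 0) (cons : ∀ g s, (∀ x ∈ s, x ≤ g) → p s → p (g ::ₘ s)) : p s := by
  have key : ∀ l : List β, l.Pairwise (· ≥ ·) → p l := by
    intro l hl
    induction l with
    | nil => exact zero
    | cons g l ih => exact cons g l (List.pairwise_cons.1 hl).1 (ih (List.pairwise_cons.1 hl).2)
  simpa using key _ (s.pairwise_sort (· ≥ ·))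

theorem IsLyndon.append_append_le_append {l g A B : List α} (hl : IsLyndon l) (hg : IsLyndon g)
    (h : l < g) (hAB : l ++ A ≤ B) : l ++ (g ++ A) ≤ g ++ B := by
  have hlt : l ++ g < g ++ l := (hl.append hg h).append_lt_append_comm hl.1 hg.1
  calc l ++ (g ++ A) = (l ++ g) ++ A := (List.append_assoc ..).symm
    _ ≤ (g ++ l) ++ A := (append_lt_append_of_length_le A A hlt (by simp [add_comm])).le
    _ = g ++ (l ++ A) := List.append_assoc ..
    _ ≤ g ++ B := append_left_le_append_left g hAB

theorem append_sortedFlatten_add_le_of_forall_le {r b c : List α} {S : Multiset (List α)}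
    (hr : IsLyndon r) (hrc : r ≤ c) (hbc : b ≤ c) (hS : ∀ x ∈ S, x ≤ c)
    (h : ∀ V : Multiset (List α), (∀ x ∈ V, IsLyndon x) → (∀ x ∈ V, x ≤ c) →
      r ++ sortedFlatten (S + V) ≤ sortedFlatten (b ::ₘ V))
    (W : Multiset (List α)) (hW : ∀ x ∈ W, IsLyndon x) :
    r ++ sortedFlatten (S + W) ≤ sortedFlatten (b ::ₘ W) := by
  induction W using multiset_induction_on_max with
  | zero => exact h 0 hW (by simp)
  | cons g W hg ih =>
    obtain hgc | hcg := le_or_gt g c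
    · exact h _ hW (Multiset.forall_mem_cons.2 ⟨hgc, fun x hx => (hg x hx).trans hgc⟩)
    rw [Multiset.forall_mem_cons] at hW
    have hmax : ∀ x ∈ S + W, x ≤ g := fun x hx =>
      (Multiset.mem_add.1 hx).elim (fun hx => (hS x hx).trans hcg.le) (hg x)
    rw [Multiset.add_cons, Multiset.cons_swap, sortedFlatten_cons_of_forall_le hmax,
      sortedFlatten_cons_of_forall_le (Multiset.forall_mem_cons.2 ⟨hbc.trans hcg.le, hg⟩)]
    exact hr.append_append_le_append hW.1 (hrc.trans_lt hcg) (ih hW.2)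

theorem append_sortedFlatten_add_le {r : List α} {C : List (List α)} (hr : IsLyndon r)
    (hs : C.Pairwise (· ≥ ·)) (hC : ∀ c ∈ C, IsLyndon c) (hlt : ∀ c ∈ C, r ++ C.flatten < c)
    (W : Multiset (List α)) (hW : ∀ x ∈ W, IsLyndon x) :
    r ++ sortedFlatten (.ofList C + W) ≤ sortedFlatten ((r ++ C.flatten) ::ₘ W) := by
  induction C generalizing r W with
  | nil =>
    refine append_sortedFlatten_add_le_of_forall_le hr le_rfl (by simp) (by simp)
      (fun V _ hVr => ?_) W hW
    simp [sortedFlatten_cons_of_forall_le hVr]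
  | cons c C ih =>
    rw [List.pairwise_cons] at hs
    rw [List.forall_mem_cons] at hC
    have hrc : r < c := (le_append_right_self r _).trans_lt (hlt c (by simp))
    refine append_sortedFlatten_add_le_of_forall_le hr hrc.le (hlt c (by simp)).le
      (by simpa using hs.1) (fun V hV hVc => ?_) W hW
    have hmax : ∀ x ∈ .ofList C + V, x ≤ c := fun x hx =>
      (Multiset.mem_add.1 hx).elim (hs.1 x) (hVc x)
    rw [← Multiset.cons_coe, Multiset.cons_add, sortedFlatten_cons_of_forall_le hmax]
    simpa using ih (hr.append hC.1 hrc) hs.2 hC.2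
      (fun x hx => by simpa using hlt x (by simp [hx])) V hV

theorem IsLyndonFactorization.exists_tail {a : α} {u : List α} {U : List (List α)}
    (hU : IsLyndonFactorization U (a :: u)) :
    ∃ U', IsLyndonFactorization U' u ∧ ∀ W : Multiset (List α), (∀ x ∈ W, IsLyndon x) →
      a :: sortedFlatten (.ofList U' + W) ≤ sortedFlatten (.ofList U + W) := by
  obtain ⟨hs, hl, e⟩ := hU
  obtain _ | ⟨_ | ⟨b, l⟩, U⟩ := U
  · simp at e
  · exact absurd rfl (hl [] (by simp)).1
  rw [List.flatten_cons, List.cons_append, List.cons.injEq] at e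
  obtain ⟨rfl, rfl⟩ := e
  rw [List.pairwise_cons] at hs
  rw [List.forall_mem_cons] at hl
  obtain ⟨C, hC⟩ := exists_isLyndonFactorization l
  have hlt := hC.lt_of_isLyndon_cons hl.1
  obtain ⟨hCs, hCl, rfl⟩ := hC
  refine ⟨C ++ U, ⟨?_, ?_, by simp⟩, fun W hW => ?_⟩
  · exact List.pairwise_append.2 ⟨hCs, hs.2, fun c hc x hx => (hs.1 x hx).trans (hlt c hc).le⟩
  · exact List.forall_mem_append.2 ⟨hCl, hl.2⟩
  · have hUW : ∀ x ∈ .ofList U + W, IsLyndon x := by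
      simpa only [Multiset.mem_add, or_imp, forall_and] using ⟨hl.2, hW⟩
    rw [← Multiset.coe_add, add_assoc, ← Multiset.cons_coe, Multiset.cons_add]
    exact append_sortedFlatten_add_le (IsLyndon.singleton b) hCs hCl hlt (.ofList U + W) hUW

theorem le_sortedFlatten_add {z u v : List α} {U V : List (List α)}
    (hU : IsLyndonFactorization U u) (hV : IsLyndonFactorization V v)
    (h : (u, v) ∈ unshuffles z) : z ≤ sortedFlatten (.ofList U + .ofList V) := by
  induction z generalizing u v U V with
  | nil => exact le_append_right_self [] _
  | cons a z ih =>
    simp only [unshuffles, List.mem_append, List.mem_map, Prod.exists, Prod.map_apply, id,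
      Prod.mk.injEq] at h
    obtain ⟨u, v, h, rfl, rfl⟩ | ⟨u, v, h, rfl, rfl⟩ := h
    · obtain ⟨U', hU', hle⟩ := hU.exists_tail
      exact (List.cons_le_cons a (ih hU' hV h)).trans (hle V hV.isLyndon)
    · obtain ⟨V', hV', hle⟩ := hV.exists_tail
      have := List.cons_le_cons a (ih hU hV' h)
      rw [add_comm] at this ⊢
      exact this.trans (hle U hU.isLyndon)

theorem exists_append_forall_unshuffles_le {w : List α} (hw : w ≠ []) (hn : ¬ IsLyndon w) :
    ∃ u v, u ≠ [] ∧ v ≠ [] ∧ w = u ++ v ∧ ∀ z, (u, v) ∈ unshuffles z → z ≤ w := by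
  obtain ⟨_ | ⟨l, _ | ⟨m, F⟩⟩, hF⟩ := exists_isLyndonFactorization w
  · exact absurd (by simpa using hF.flatten_eq.symm) hw
  · exact absurd (by simpa [← hF.flatten_eq] using hF.isLyndon l (by simp)) hn
  obtain ⟨hs, hl, rfl⟩ := hF
  have hlm := List.forall_mem_cons.1 hl
  refine ⟨l, (m :: F).flatten, hlm.1.1, by simp [(hl m (by simp)).1], rfl, fun z hz => ?_⟩
  rw [← sortedFlatten_coe hs]
  exact le_sortedFlatten_add (U := [l]) ⟨by simp, by simpa using hlm.1, by simp⟩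
    ⟨(List.pairwise_cons.1 hs).2, hlm.2, rfl⟩ hz

end Shuffles

section Layers

variable (R : Type*) [CommRing R] {X : Type*}

/-- The bracket `⁅a₁, ⁅a₂, … ⁅aₙ₋₁, aₙ⁆ … ⁆⁆` of the letters of a word in the free Lie algebra; the
empty word is sent to `0`. -/
noncomputable def rightNormedBracket : List X → FreeLieAlgebra R X
  | [] => 0
  | [a] => FreeLieAlgebra.of R a
  | a :: b :: w => ⁅FreeLieAlgebra.of R a, rightNormedBracket (b :: w)⁆

theorem rightNormedBracket_cons (a : X) {w : List X} (hw : w ≠ []) :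
    rightNormedBracket R (a :: w) = ⁅FreeLieAlgebra.of R a, rightNormedBracket R w⁆ := by
  obtain _ | ⟨b, w⟩ := w
  · exact absurd rfl hw
  · rw [rightNormedBracket]

variable (X) in
/-- The homogeneous component of degree `k` of the free Lie algebra, as the span of the
right-normed brackets of `k` generators. -/
noncomputable def lieLayer (k : ℕ) : Submodule R (FreeLieAlgebra R X) :=
  Submodule.span R (rightNormedBracket R '' {w | w.length = k})

theorem of_mem_lieLayer_one (a : X) : FreeLieAlgebra.of R a ∈ lieLayer R X 1 :=
  Submodule.subset_span ⟨[a], rfl, by rw [rightNormedBracket]⟩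

variable {R}

theorem of_lie_mem_lieLayer {k : ℕ} (a : X) {x : FreeLieAlgebra R X} (hx : x ∈ lieLayer R X k) :
    ⁅FreeLieAlgebra.of R a, x⁆ ∈ lieLayer R X (k + 1) := by
  induction hx using Submodule.span_induction with
  | mem x hx =>
    obtain ⟨w, rfl, rfl⟩ := hx
    obtain rfl | hw := eq_or_ne w []
    · simp [rightNormedBracket]
    · exact Submodule.subset_span ⟨a :: w, rfl, rightNormedBracket_cons R a hw⟩
  | zero => simp
  | add x y _ _ hx hy => simpa using add_mem hx hy
  | smul c x _ hx => simpa using Submodule.smul_mem _ c hx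

theorem lie_mem_lieLayer {i j : ℕ} {x y : FreeLieAlgebra R X} (hx : x ∈ lieLayer R X i)
    (hy : y ∈ lieLayer R X j) : ⁅x, y⁆ ∈ lieLayer R X (i + j) := by
  induction hx using Submodule.span_induction with
  | mem x hx =>
    obtain ⟨w, rfl, rfl⟩ := hx
    induction w generalizing y j with
    | nil => simp [rightNormedBracket]
    | cons a w ih =>
      obtain rfl | hw := eq_or_ne w []
      · simpa [rightNormedBracket, add_comm] using of_lie_mem_lieLayer a hy
      · rw [rightNormedBracket_cons R a hw, lie_lie, List.length_cons]
        refine sub_mem ?_ ?_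
        · convert of_lie_mem_lieLayer a (ih hy) using 1
          ring_nf
        · convert ih (of_lie_mem_lieLayer a hy) using 1
          ring_nf
  | zero => simp
  | add x y _ _ hx hy => simpa using add_mem hx hy
  | smul c x _ hx => simpa using Submodule.smul_mem _ c hx

theorem lieLayer_zero : lieLayer R X 0 = ⊥ := by
  simp [lieLayer, List.length_eq_zero_iff, rightNormedBracket]

theorem lieLayer_one : lieLayer R X 1 = Submodule.span R (Set.range (FreeLieAlgebra.of R)) := by
  rw [lieLayer]
  congr 1
  ext x
  simp [List.length_eq_one_iff, rightNormedBracket]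

theorem lieLayer_add_two (k : ℕ) : lieLayer R X (k + 2) = Submodule.span R
    {z | ∃ x ∈ lieLayer R X 1, ∃ y ∈ lieLayer R X (k + 1), z = ⁅x, y⁆} := by
  refine le_antisymm (Submodule.span_le.2 ?_) (Submodule.span_le.2 ?_)
  · rintro _ ⟨_ | ⟨a, w⟩, hw, rfl⟩
    · simp at hw
    have hlen : w.length = k + 1 := by simpa using hw
    have hw : w ≠ [] := List.ne_nil_of_length_eq_add_one hlen
    exact Submodule.subset_span ⟨_, of_mem_lieLayer_one R a, _,
      Submodule.subset_span ⟨w, hlen, rfl⟩, rightNormedBracket_cons R a hw⟩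
  · rintro _ ⟨x, hx, y, hy, rfl⟩
    have := lie_mem_lieLayer hx hy
    rwa [show 1 + (k + 1) = k + 2 by ring] at this

theorem freeLieLayer_eq_lieLayer (d : ℕ) : ∀ k, freeLieLayer d k = lieLayer ℝ (Fin d) k
  | 0 => by rw [freeLieLayer, lieLayer_zero]
  | 1 => by rw [freeLieLayer, freeLieGen, lieLayer_one]
  | k + 2 => by
    rw [freeLieLayer, freeLieGen, ← lieLayer_one, freeLieLayer_eq_lieLayer d (k + 1),
      lieLayer_add_two]

end Layers

attribute [local instance 100] LieRing.ofAssociativeRing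

section WordAlgebra

variable (R : Type*) [CommRing R] {X : Type*}

variable (X) in
/-- The algebra of noncommutative polynomials, i.e. the free associative algebra on `X` together
with its basis of words. -/
abbrev WordAlgebra : Type _ := MonoidAlgebra R (FreeMonoid X)

/-- The basis element of the word algebra attached to a word. -/
noncomputable def word (w : List X) : WordAlgebra R X :=
  .single (FreeMonoid.ofList w) 1

/-- The coefficient of a word, as a linear functional on the word algebra. -/
noncomputable def wordCoeff (w : List X) : WordAlgebra R X →ₗ[R] R :=
  Finsupp.lapply (FreeMonoid.ofList w) ∘ₗ (MonoidAlgebra.coeffLinearEquiv R).toLinearMap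

/-- The noncommutative polynomials all of whose words lie in `S`. -/
noncomputable def wordSpan (S : Set (List X)) : Submodule R (WordAlgebra R X) :=
  Submodule.span R (word R '' S)

theorem word_nil : word R ([] : List X) = 1 := rfl

theorem word_append (u v : List X) : word R (u ++ v) = word R u * word R v := by
  simp [word, MonoidAlgebra.single_mul_single]

theorem word_cons (a : X) (w : List X) : word R (a :: w) = word R [a] * word R w :=
  word_append R [a] w

theorem wordCoeff_word_self (w : List X) : wordCoeff R w (word R w) = 1 := by
  simp [wordCoeff, word]

variable {R}

theorem wordCoeff_word_of_ne {v w : List X} (h : v ≠ w) : wordCoeff R w (word R v) = 0 := by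
  simp [wordCoeff, word, h]

theorem wordAlgebra_induction {p : WordAlgebra R X → Prop} (f : WordAlgebra R X)
    (word : ∀ w, p (word R w)) (add : ∀ f g, p f → p g → p (f + g))
    (smul : ∀ (c : R) f, p f → p (c • f)) : p f :=
  MonoidAlgebra.induction_on f (fun w => word w.toList) add smul

theorem lift_word {A : Type*} [Ring A] [Algebra R A] (f : X → A) (w : List X) :
    MonoidAlgebra.lift R A (FreeMonoid X) (FreeMonoid.lift f) (word R w) = (w.map f).prod := by
  rw [word, MonoidAlgebra.lift_single, one_smul, FreeMonoid.lift_ofList]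

theorem wordSpan_mono {S T : Set (List X)} (h : S ⊆ T) : wordSpan R S ≤ wordSpan R T :=
  Submodule.span_mono (Set.image_mono h)

theorem word_mem_wordSpan {S : Set (List X)} {w : List X} (h : w ∈ S) :
    word R w ∈ wordSpan R S :=
  Submodule.subset_span ⟨w, h, rfl⟩

theorem mul_mem_wordSpan {S T U : Set (List X)} {f g : WordAlgebra R X}
    (hf : f ∈ wordSpan R S) (hg : g ∈ wordSpan R T) (h : ∀ s ∈ S, ∀ t ∈ T, s ++ t ∈ U) :
    f * g ∈ wordSpan R U := by
  have hmul : wordSpan R S * wordSpan R T ≤ wordSpan R U := by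
    rw [wordSpan, wordSpan, Submodule.span_mul_span, Submodule.span_le]
    rintro _ ⟨_, ⟨s, hs, rfl⟩, _, ⟨t, ht, rfl⟩, rfl⟩
    simpa only [word_append, SetLike.mem_coe] using word_mem_wordSpan (R := R) (h s hs t ht)
  exact hmul (Submodule.mul_mem_mul hf hg)

theorem mem_wordSpan_iff {S : Set (List X)} {f : WordAlgebra R X} :
    f ∈ wordSpan R S ↔ ∀ w ∉ S, wordCoeff R w f = 0 := by
  have h : wordSpan R S = MonoidAlgebra.supported R R (FreeMonoid.toList ⁻¹' S) := by
    have hS : FreeMonoid.toList ⁻¹' S = FreeMonoid.ofList '' S :=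
      (FreeMonoid.ofList.image_eq_preimage_symm S).symm
    rw [MonoidAlgebra.supported_eq_span_single, hS, Set.image_image]
    rfl
  rw [h, MonoidAlgebra.mem_supported']
  rfl

theorem exists_smallest_word [LinearOrder X] {f : WordAlgebra R X} (hf : f ≠ 0) :
    ∃ w, wordCoeff R w f ≠ 0 ∧ f ∈ wordSpan R {v | w ≤ v} := by
  have hne : f.coeff.support.Nonempty := by
    rw [Finsupp.support_nonempty_iff]
    exact fun h => hf (MonoidAlgebra.ext h)
  obtain ⟨w, hw, hmin⟩ := f.coeff.support.exists_min_image FreeMonoid.toList hne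
  refine ⟨w.toList, Finsupp.mem_support_iff.1 hw, mem_wordSpan_iff.2 fun v hv => ?_⟩
  by_contra hne
  exact hv (hmin (FreeMonoid.ofList v) (Finsupp.mem_support_iff.2 hne))

variable (R X) in
/-- The Lie homomorphism from the free Lie algebra to the word algebra that is the identity on
letters; its image consists of the Lie polynomials. -/
noncomputable def lieToWord : FreeLieAlgebra R X →ₗ⁅R⁆ WordAlgebra R X :=
  FreeLieAlgebra.lift R fun a => word R [a]

theorem lieToWord_of (a : X) : lieToWord R X (.of R a) = word R [a] :=
  FreeLieAlgebra.lift_of_apply ..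

theorem lieToWord_rightNormedBracket_mem_wordSpan (w : List X) :
    lieToWord R X (rightNormedBracket R w) ∈ wordSpan R {v | v.length = w.length} := by
  induction w with
  | nil => simp [rightNormedBracket]
  | cons a w ih =>
    have ha : word R [a] ∈ wordSpan R {v | v.length = 1} := word_mem_wordSpan rfl
    obtain rfl | hw := eq_or_ne w []
    · simpa [rightNormedBracket, lieToWord_of] using ha
    · rw [rightNormedBracket_cons R a hw, LieHom.map_lie, lieToWord_of,
        LieRing.of_associative_ring_bracket]
      exact sub_mem (mul_mem_wordSpan ha ih fun s hs t ht => by simp_all [add_comm])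
        (mul_mem_wordSpan ih ha fun s hs t ht => by simp_all)

theorem lieToWord_mem_wordSpan {k : ℕ} {x : FreeLieAlgebra R X} (hx : x ∈ lieLayer R X k) :
    lieToWord R X x ∈ wordSpan R {w | w.length = k} := by
  have hle :
      lieLayer R X k ≤ (wordSpan R {w | w.length = k}).comap (lieToWord R X).toLinearMap := by
    refine Submodule.span_le.2 ?_
    rintro _ ⟨w, rfl, rfl⟩
    exact lieToWord_rightNormedBracket_mem_wordSpan w
  exact hle hx

end WordAlgebra

section Dynkin

variable (R : Type*) [CommRing R] (X : Type*)

/-- The Dynkin operator: the linear map sending a word to its right-normed bracket. -/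
noncomputable def dynkin : WordAlgebra R X →ₗ[R] FreeLieAlgebra R X :=
  Finsupp.linearCombination R (fun w : FreeMonoid X => rightNormedBracket R w.toList) ∘ₗ
    (MonoidAlgebra.coeffLinearEquiv R).toLinearMap

/-- The adjoint representation of the free Lie algebra, extended to the word algebra. -/
noncomputable def wordAd : WordAlgebra R X →ₐ[R] Module.End R (FreeLieAlgebra R X) :=
  MonoidAlgebra.lift R _ _ (FreeMonoid.lift fun a => LieAlgebra.ad R _ (.of R a))

/-- The augmentation of the word algebra, sending every letter to `0`. -/
noncomputable def augmentation : WordAlgebra R X →ₐ[R] R :=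
  MonoidAlgebra.lift R _ _ (FreeMonoid.lift fun _ => 0)

variable {R X}

theorem dynkin_word (w : List X) : dynkin R X (word R w) = rightNormedBracket R w := by
  simp [dynkin, word]

theorem wordAd_word_cons (a : X) (w : List X) (y : FreeLieAlgebra R X) :
    wordAd R X (word R (a :: w)) y = ⁅FreeLieAlgebra.of R a, wordAd R X (word R w) y⁆ := by
  simp [wordAd, lift_word]

theorem augmentation_word {w : List X} (hw : w ≠ []) : augmentation R X (word R w) = 0 := by
  rw [augmentation, lift_word, List.map_const', List.prod_replicate]
  exact zero_pow (by simpa using hw)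

theorem wordAd_lieToWord (x y : FreeLieAlgebra R X) : wordAd R X (lieToWord R X x) y = ⁅x, y⁆ := by
  have h : (wordAd R X).toLieHom.comp (lieToWord R X) = LieAlgebra.ad R _ := by
    refine FreeLieAlgebra.hom_ext fun a => ?_
    simp [lieToWord_of, wordAd, lift_word]
  exact DFunLike.congr_fun (DFunLike.congr_fun h x) y

theorem augmentation_lieToWord (x : FreeLieAlgebra R X) :
    augmentation R X (lieToWord R X x) = 0 := by
  have h : (augmentation R X).toLieHom.comp (lieToWord R X) = 0 := by
    refine FreeLieAlgebra.hom_ext fun a => ?_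
    simp [lieToWord_of, augmentation_word]
  exact DFunLike.congr_fun h x

theorem dynkin_word_append {v : List X} (u : List X) (hv : v ≠ []) :
    dynkin R X (word R (u ++ v)) = wordAd R X (word R u) (dynkin R X (word R v)) := by
  induction u with
  | nil => simp [word_nil]
  | cons a u ih =>
    rw [wordAd_word_cons, ← ih, List.cons_append, dynkin_word, dynkin_word,
      rightNormedBracket_cons R a (by simp [hv])]

theorem dynkin_mul (f g : WordAlgebra R X) :
    dynkin R X (f * g) = wordAd R X f (dynkin R X g) + augmentation R X g • dynkin R X f := by
  induction g using wordAlgebra_induction with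
  | word v =>
    obtain rfl | hv := eq_or_ne v []
    · have h : dynkin R X 1 = 0 := dynkin_word []
      simp [word_nil, h]
    induction f using wordAlgebra_induction with
    | word u =>
      rw [← word_append, dynkin_word_append u hv, augmentation_word hv, zero_smul, add_zero]
    | add f₁ f₂ h₁ h₂ => rw [add_mul, map_add, h₁, h₂, map_add, map_add, LinearMap.add_apply,
        smul_add, add_add_add_comm]
    | smul c f h => rw [smul_mul_assoc, map_smul, h, map_smul, map_smul, LinearMap.smul_apply,
        smul_add, smul_comm c]
  | add g₁ g₂ h₁ h₂ => rw [mul_add, map_add, h₁, h₂, map_add, map_add, map_add, add_smul,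
      add_add_add_comm]
  | smul c g h => rw [mul_smul_comm, map_smul, h, map_smul, map_smul, map_smul, smul_add,
      smul_assoc]

theorem dynkin_lieToWord_lie (x y : FreeLieAlgebra R X) :
    dynkin R X (lieToWord R X ⁅x, y⁆) =
      ⁅x, dynkin R X (lieToWord R X y)⁆ - ⁅y, dynkin R X (lieToWord R X x)⁆ := by
  simp only [LieHom.map_lie, LieRing.of_associative_ring_bracket, map_sub, dynkin_mul,
    wordAd_lieToWord, augmentation_lieToWord, zero_smul, add_zero]

theorem dynkin_lieToWord_rightNormedBracket (w : List X) :
    dynkin R X (lieToWord R X (rightNormedBracket R w)) =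
      w.length • rightNormedBracket R w := by
  induction w with
  | nil => simp [rightNormedBracket]
  | cons a w ih =>
    have ha : dynkin R X (lieToWord R X (.of R a)) = .of R a := by
      rw [lieToWord_of, dynkin_word, rightNormedBracket]
    obtain rfl | hw := eq_or_ne w []
    · simpa [rightNormedBracket] using ha
    · rw [rightNormedBracket_cons R a hw, dynkin_lieToWord_lie, ih, ha, lie_nsmul,
        List.length_cons, succ_nsmul, sub_eq_add_neg, lie_skew]

theorem dynkin_lieToWord {k : ℕ} {x : FreeLieAlgebra R X} (hx : x ∈ lieLayer R X k) :
    dynkin R X (lieToWord R X x) = k • x := by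
  refine LinearMap.eqOn_span (f := dynkin R X ∘ₗ (lieToWord R X).toLinearMap)
    (g := k • LinearMap.id) ?_ hx
  rintro _ ⟨w, rfl, rfl⟩
  exact dynkin_lieToWord_rightNormedBracket w

theorem eq_zero_of_lieToWord_eq_zero [Algebra ℚ R] {k : ℕ} (hk : k ≠ 0) {x : FreeLieAlgebra R X}
    (hx : x ∈ lieLayer R X k) (h : lieToWord R X x = 0) : x = 0 := by
  have : Module ℚ (FreeLieAlgebra R X) := Module.compHom _ (algebraMap ℚ R)
  have : IsAddTorsionFree (FreeLieAlgebra R X) := .of_module_rat _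
  have hkx : k • x = 0 := by rw [← dynkin_lieToWord hx, h, map_zero]
  exact (smul_eq_zero.1 hkx).resolve_left hk

end Dynkin

section Ree

variable (R : Type*) [CommRing R] (X : Type*)

/-- The coproduct of the word algebra for which letters are primitive, with the tensor square
encoded as the monoid algebra of the product monoid. -/
noncomputable def coproduct :
    WordAlgebra R X →ₐ[R] MonoidAlgebra R (FreeMonoid X × FreeMonoid X) :=
  MonoidAlgebra.lift R _ _ (FreeMonoid.lift fun a =>
    .single (FreeMonoid.of a, 1) 1 + .single (1, FreeMonoid.of a) 1)

variable {R X}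

theorem coproduct_word_singleton (a : X) : coproduct R X (word R [a]) =
    .single (FreeMonoid.of a, 1) 1 + .single (1, FreeMonoid.of a) 1 := by
  simp [coproduct, lift_word]

theorem coproduct_word (z : List X) : coproduct R X (word R z) =
    ((unshuffles z).map fun p =>
      .single (FreeMonoid.ofList p.1, FreeMonoid.ofList p.2) 1).sum := by
  induction z with
  | nil =>
    rw [word_nil, map_one, unshuffles, List.map_singleton, List.sum_singleton]
    exact MonoidAlgebra.one_def
  | cons a z ih =>
    rw [word_cons, map_mul, ih, coproduct_word_singleton, add_mul, ← List.sum_map_mul_left,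
      ← List.sum_map_mul_left, unshuffles, List.map_append, List.sum_append, List.map_map,
      List.map_map]
    simp [Function.comp_def, MonoidAlgebra.single_mul_single]

theorem commute_mapDomainAlgHom_inl_inr {M N : Type*} [Monoid M] [Monoid N]
    (f : MonoidAlgebra R M) (g : MonoidAlgebra R N) :
    Commute (MonoidAlgebra.mapDomainAlgHom R R (MonoidHom.inl M N) f)
      (MonoidAlgebra.mapDomainAlgHom R R (MonoidHom.inr M N) g) := by
  induction f using MonoidAlgebra.induction_on with
  | of m =>
    induction g using MonoidAlgebra.induction_on with
    | of n => simp [Commute, SemiconjBy, MonoidAlgebra.single_mul_single]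
    | add g₁ g₂ h₁ h₂ => simpa only [map_add] using h₁.add_right h₂
    | smul c g h => simpa only [map_smul] using h.smul_right c
  | add f₁ f₂ h₁ h₂ => simpa only [map_add] using h₁.add_left h₂
  | smul c f h => simpa only [map_smul] using h.smul_left c

theorem coproduct_lieToWord (x : FreeLieAlgebra R X) : coproduct R X (lieToWord R X x) =
    MonoidAlgebra.mapDomainAlgHom R R (MonoidHom.inl _ _) (lieToWord R X x) +
      MonoidAlgebra.mapDomainAlgHom R R (MonoidHom.inr _ _) (lieToWord R X x) := by
  let left := (MonoidAlgebra.mapDomainAlgHom R R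
    (MonoidHom.inl (FreeMonoid X) (FreeMonoid X))).toLieHom.comp (lieToWord R X)
  let right := (MonoidAlgebra.mapDomainAlgHom R R
    (MonoidHom.inr (FreeMonoid X) (FreeMonoid X))).toLieHom.comp (lieToWord R X)
  have hcomm (x y : FreeLieAlgebra R X) : ⁅left x, right y⁆ = 0 :=
    (commute_mapDomainAlgHom_inl_inr _ _).lie_eq
  let sum : FreeLieAlgebra R X →ₗ⁅R⁆ MonoidAlgebra R (FreeMonoid X × FreeMonoid X) :=
    { (left.toLinearMap + right.toLinearMap) with
      map_lie' := fun {x y} => by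
        have hcomm' : ⁅right x, left y⁆ = 0 := by rw [← lie_skew, hcomm, neg_zero]
        change left ⁅x, y⁆ + right ⁅x, y⁆ = ⁅left x + right x, left y + right y⁆
        rw [LieHom.map_lie, LieHom.map_lie, add_lie, lie_add, lie_add, hcomm, hcomm', add_zero,
          zero_add] }
  have h : (coproduct R X).toLieHom.comp (lieToWord R X) = sum := by
    refine FreeLieAlgebra.hom_ext fun a => ?_
    change coproduct R X (lieToWord R X _) = left _ + right _
    rw [lieToWord_of, coproduct_word_singleton]
    simp [left, right, lieToWord_of, word]
  exact DFunLike.congr_fun h x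

variable (R) in
/-- The linear functional on the word algebra pairing a word `z` with the shuffle product of `u`
and `v`. -/
noncomputable def shuffleCoeff (u v : List X) : WordAlgebra R X →ₗ[R] R :=
  Finsupp.lapply (FreeMonoid.ofList u, FreeMonoid.ofList v) ∘ₗ
    (MonoidAlgebra.coeffLinearEquiv R).toLinearMap ∘ₗ (coproduct R X).toLinearMap

theorem shuffleCoeff_word [DecidableEq X] (u v z : List X) :
    shuffleCoeff R u v (word R z) = (unshuffles z).count (u, v) := by
  simp only [shuffleCoeff, LinearMap.comp_apply, AlgHom.toLinearMap_apply, coproduct_word]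
  induction unshuffles z with
  | nil => simp
  | cons p l ih =>
    rw [List.map_cons, List.sum_cons, map_add, map_add, ih, List.count_cons, add_comm]
    obtain rfl | hp := eq_or_ne p (u, v)
    · simp
    · have : (FreeMonoid.ofList u, FreeMonoid.ofList v) ≠
          (FreeMonoid.ofList p.1, FreeMonoid.ofList p.2) := fun h => hp h.symm
      simp [Finsupp.single_eq_of_ne this, hp]

theorem shuffleCoeff_lieToWord {u v : List X} (hu : u ≠ []) (hv : v ≠ [])
    (x : FreeLieAlgebra R X) : shuffleCoeff R u v (lieToWord R X x) = 0 := by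
  have hl : (FreeMonoid.ofList u, FreeMonoid.ofList v) ∉
      Set.range (MonoidHom.inl (FreeMonoid X) (FreeMonoid X)) := by
    rintro ⟨w, hw⟩
    exact hv (Prod.ext_iff.1 hw).2.symm
  have hr : (FreeMonoid.ofList u, FreeMonoid.ofList v) ∉
      Set.range (MonoidHom.inr (FreeMonoid X) (FreeMonoid X)) := by
    rintro ⟨w, hw⟩
    exact hu (Prod.ext_iff.1 hw).1.symm
  simp only [shuffleCoeff, LinearMap.comp_apply, AlgHom.toLinearMap_apply, coproduct_lieToWord]
  simp [Finsupp.mapDomain_of_notMem_range _ _ hl, Finsupp.mapDomain_of_notMem_range _ _ hr]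

/-- Lie polynomials vanish on all proper shuffles, whereas the largest word of the shuffle of two
suitable factors of a non-Lyndon word is the word itself. -/
theorem isLyndon_of_lieToWord_mem_wordSpan [LinearOrder X] [Algebra ℚ R]
    {x : FreeLieAlgebra R X} {w : List X} (hne : w ≠ [])
    (hw : wordCoeff R w (lieToWord R X x) ≠ 0)
    (hmin : lieToWord R X x ∈ wordSpan R {v | w ≤ v}) : IsLyndon w := by
  by_contra hn
  obtain ⟨u, v, hu, hv, rfl, hle⟩ := exists_append_forall_unshuffles_le hne hn
  have hshuffle : shuffleCoeff R u v (lieToWord R X x) =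
      (unshuffles (u ++ v)).count (u, v) • wordCoeff R (u ++ v) (lieToWord R X x) := by
    refine LinearMap.eqOn_span (f := shuffleCoeff R u v)
      (g := (unshuffles (u ++ v)).count (u, v) • wordCoeff R (u ++ v)) ?_ hmin
    rintro _ ⟨z, hz, rfl⟩
    rw [shuffleCoeff_word, LinearMap.smul_apply]
    obtain rfl | hlt := eq_or_lt_of_le (show u ++ v ≤ z from hz)
    · rw [wordCoeff_word_self, nsmul_one]
    · rw [wordCoeff_word_of_ne hlt.ne', smul_zero,
        List.count_eq_zero.2 fun h => (hle z h).not_gt hlt, Nat.cast_zero]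
  have : IsAddTorsionFree R := .of_module_rat R
  rw [shuffleCoeff_lieToWord hu hv, eq_comm, smul_eq_zero, List.count_eq_zero] at hshuffle
  exact hshuffle.elim (· (mem_unshuffles_append u v)) hw

end Ree

section LeadingWords

variable {R : Type*} [CommRing R] {X : Type*} [LinearOrder X]

theorem mem_wordSpan_of_sub_word_mem {w : List X} {f : WordAlgebra R X}
    (h : f - word R w ∈ wordSpan R {v | v.length = w.length ∧ w < v}) :
    f ∈ wordSpan R {v | v.length = w.length ∧ w ≤ v} := by
  have hsub : {v | v.length = w.length ∧ w < v} ⊆ {v | v.length = w.length ∧ w ≤ v} :=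
    fun v hv => ⟨hv.1, hv.2.le⟩
  rw [← sub_add_cancel f (word R w)]
  exact add_mem (wordSpan_mono hsub h) (word_mem_wordSpan ⟨rfl, le_rfl⟩)

theorem IsLyndon.exists_lieToWord_sub_word_mem {w : List X} (hw : IsLyndon w) :
    ∃ x ∈ lieLayer R X w.length,
      lieToWord R X x - word R w ∈ wordSpan R {v | v.length = w.length ∧ w < v} := by
  induction hn : w.length using Nat.strong_induction_on generalizing w with
  | h n ih =>
    subst hn
    obtain ⟨a, rfl⟩ | ⟨l, m, hl, hm, hlm, rfl⟩ := hw.eq_singleton_or_exists_append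
    · refine ⟨.of R a, of_mem_lieLayer_one R a, ?_⟩
      rw [lieToWord_of, sub_self]
      exact zero_mem _
    obtain ⟨x, hx, hxl⟩ := ih l.length (by simp [List.length_pos_iff, hm.1]) hl rfl
    obtain ⟨y, hy, hym⟩ := ih m.length (by simp [List.length_pos_iff, hl.1]) hm rfl
    have hlml : l ++ m < m ++ l := hw.append_lt_append_comm hl.1 hm.1
    have hbracket : lieToWord R X ⁅x, y⁆ - word R (l ++ m) =
        (lieToWord R X x - word R l) * lieToWord R X y +
          word R l * (lieToWord R X y - word R m) - lieToWord R X y * lieToWord R X x := by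
      rw [LieHom.map_lie, LieRing.of_associative_ring_bracket, word_append]
      noncomm_ring
    refine ⟨⁅x, y⁆, by simpa using lie_mem_lieLayer hx hy, ?_⟩
    rw [hbracket]
    refine sub_mem (add_mem ?_ ?_) ?_
    · refine mul_mem_wordSpan hxl (mem_wordSpan_of_sub_word_mem hym) ?_
      rintro u ⟨hu, hlu⟩ v ⟨hv, -⟩
      exact ⟨by simp [hu, hv], append_lt_append_of_length_le _ _ hlu hu.le⟩
    · refine mul_mem_wordSpan (S := {l}) (word_mem_wordSpan rfl) hym ?_
      rintro _ rfl v ⟨hv, hmv⟩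
      exact ⟨by simp [hv], (append_left_lt_append_left_iff _).2 hmv⟩
    · refine mul_mem_wordSpan (mem_wordSpan_of_sub_word_mem hym)
        (mem_wordSpan_of_sub_word_mem hxl) ?_
      rintro u ⟨hu, hmu⟩ v ⟨hv, hlv⟩
      refine ⟨by simp [hu, hv, add_comm], hlml.trans_le ?_⟩
      obtain rfl | hmu := hmu.eq_or_lt
      · exact append_left_le_append_left _ hlv
      · exact (append_lt_append_of_length_le _ _ hmu hu.le).le

theorem surjective_of_isUpperTriangular {ι M : Type*} [Finite ι] [LinearOrder ι]
    [AddCommGroup M] [Module R M] (f : M →ₗ[R] ι → R) (x : ι → M)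
    (hdiag : ∀ i, IsUnit (f (x i) i)) (htri : ∀ i j, j < i → f (x i) j = 0) :
    Function.Surjective f := by
  cases nonempty_fintype ι
  let A : Matrix ι ι R := .of fun i => f (x i)
  have hA : IsUnit A := by
    have hupper : A.IsUpperTriangular := fun i j => htri i j
    rw [Matrix.isUnit_iff_isUnit_det, Matrix.det_of_isUpperTriangular hupper,
      IsUnit.prod_univ_iff]
    exact hdiag
  intro y
  obtain ⟨c, rfl⟩ := Matrix.vecMul_surjective_iff_isUnit.2 hA y
  refine ⟨∑ i, c i • x i, ?_⟩
  simp only [map_sum, map_smul, Matrix.vecMul_eq_sum]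
  rfl

variable (X) in
/-- The set of Lyndon words of length `k`. -/
def lyndonWords (k : ℕ) : Set (List X) :=
  {w | w.length = k ∧ IsLyndon w}

theorem finite_lyndonWords [Finite X] (k : ℕ) : (lyndonWords X k).Finite :=
  (List.finite_length_eq X k).subset fun _ hw => hw.1

variable (R X) in
/-- The coefficients of the Lyndon words in the Lie polynomial of an element of a layer. -/
noncomputable def lyndonCoeffs (k : ℕ) : lieLayer R X k →ₗ[R] lyndonWords X k → R :=
  LinearMap.pi fun w => wordCoeff R w.1 ∘ₗ (lieToWord R X).toLinearMap ∘ₗ (lieLayer R X k).subtype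

theorem lyndonCoeffs_injective [Algebra ℚ R] {k : ℕ} (hk : k ≠ 0) :
    Function.Injective (lyndonCoeffs R X k) := by
  rw [injective_iff_map_eq_zero]
  rintro ⟨x, hx⟩ h
  refine Subtype.ext (eq_zero_of_lieToWord_eq_zero hk hx (by_contra fun hne => ?_))
  obtain ⟨w, hw, hmin⟩ := exists_smallest_word hne
  have hlen : w.length = k := by
    by_contra hlen
    exact hw (mem_wordSpan_iff.1 (lieToWord_mem_wordSpan hx) w hlen)
  have hne : w ≠ [] := by
    rintro rfl
    exact hk hlen.symm
  exact hw (congrFun h ⟨w, hlen, isLyndon_of_lieToWord_mem_wordSpan hne hw hmin⟩)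

theorem lyndonCoeffs_surjective [Finite X] (k : ℕ) :
    Function.Surjective (lyndonCoeffs R X k) := by
  have : Finite (lyndonWords X k) := (finite_lyndonWords k).to_subtype
  have hexists (w : lyndonWords X k) : ∃ x : lieLayer R X k,
      lieToWord R X x - word R w.1 ∈ wordSpan R {v | v.length = w.1.length ∧ w.1 < v} := by
    obtain ⟨w, rfl, hw⟩ := w
    obtain ⟨x, hx, hxw⟩ := hw.exists_lieToWord_sub_word_mem (R := R)
    exact ⟨⟨x, hx⟩, hxw⟩
  choose x hx using hexists
  have hcoeff (w v : lyndonWords X k) (h : v ≤ w) :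
      lyndonCoeffs R X k (x w) v = wordCoeff R v.1 (word R w.1) := by
    refine sub_eq_zero.1 (Eq.trans ?_ (mem_wordSpan_iff.1 (hx w) v fun hv => hv.2.not_ge h))
    rw [map_sub]
    rfl
  refine surjective_of_isUpperTriangular _ x (fun w => ?_) fun w v h => ?_
  · rw [hcoeff w w le_rfl, wordCoeff_word_self]
    exact isUnit_one
  · rw [hcoeff w v h.le, wordCoeff_word_of_ne fun e => h.ne' (Subtype.ext e)]

theorem finrank_lieLayer [Nontrivial R] [Algebra ℚ R] [Finite X] {k : ℕ} (hk : k ≠ 0) :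
    Module.finrank R (lieLayer R X k) = (lyndonWords X k).ncard := by
  have : Fintype (lyndonWords X k) := (finite_lyndonWords k).fintype
  rw [← Nat.card_coe_set_eq, Nat.card_eq_fintype_card, ← Module.finrank_fintype_fun_eq_card R]
  exact (LinearEquiv.ofBijective (lyndonCoeffs R X k)
    ⟨lyndonCoeffs_injective hk, lyndonCoeffs_surjective k⟩).finrank_eq

end LeadingWords

section PeriodicOrbits

open Function

variable {α : Type*} {f : α → α}

theorem ncard_ptsOfPeriod {k : ℕ} (hk : k ≠ 0) (hfin : (ptsOfPeriod f k).Finite) :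
    (ptsOfPeriod f k).ncard = ∑ m ∈ k.divisors, {x | minimalPeriod f x = m}.ncard := by
  have hmem (x : α) : x ∈ ptsOfPeriod f k ↔ minimalPeriod f x ∈ k.divisors := by
    rw [mem_ptsOfPeriod, isPeriodicPt_iff_minimalPeriod_dvd, Nat.mem_divisors, and_iff_left hk]
  rw [Set.ncard_eq_toFinset_card _ hfin, Finset.card_eq_sum_card_fiberwise
    (f := minimalPeriod f) (t := k.divisors) fun x hx => (hmem x).1 (by simpa using hx)]
  refine Finset.sum_congr rfl fun m hm => ?_
  rw [← Set.ncard_coe_finset]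
  congr 1
  ext x
  have : minimalPeriod f x = m → x ∈ ptsOfPeriod f k := fun h => (hmem x).2 (h ▸ hm)
  simpa using this

theorem ncard_minimalPeriod_eq_mul {m : ℕ} (hm : m ≠ 0) {S : Set α}
    (hS : ∀ x ∈ S, minimalPeriod f x = m)
    (huniq : ∀ y, minimalPeriod f y = m → ∃! x, x ∈ S ∧ ∃ n, f^[n] y = x) :
    {y | minimalPeriod f y = m}.ncard = m * S.ncard := by
  have hreturn {x : α} {i : ℕ} (hx : minimalPeriod f x = m) (hi : i ≤ m) :
      f^[m - i] (f^[i] x) = x := by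
    rw [← iterate_add_apply, Nat.sub_add_cancel hi, ← hx, iterate_minimalPeriod]
  have hiterate {x : α} (hx : minimalPeriod f x = m) (i : ℕ) : minimalPeriod f (f^[i] x) = m := by
    rw [minimalPeriod_apply_iterate (minimalPeriod_pos_iff_mem_periodicPts.1 (by lia)), hx]
  have hbij : Set.BijOn (fun p : ℕ × α => f^[p.1] p.2) (Set.Iio m ×ˢ S)
      {y | minimalPeriod f y = m} := by
    refine ⟨fun p hp => hiterate (hS _ hp.2) p.1, ?_, fun y hy => ?_⟩
    · rintro ⟨i, x⟩ ⟨hi, hx⟩ ⟨j, y⟩ ⟨hj, hy⟩ (h : f^[i] x = f^[j] y)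
      have hxy : x = y := (huniq _ (hiterate (hS x hx) i)).unique
        ⟨hx, m - i, hreturn (hS x hx) hi.le⟩ ⟨hy, m - j, by rw [h, hreturn (hS y hy) hj.le]⟩
      subst hxy
      rw [← hS x hx] at hi hj
      exact congrArg (·, x) (iterate_injOn_Iio_minimalPeriod hi hj h)
    · obtain ⟨_, ⟨hx, n, rfl⟩, -⟩ := huniq y hy
      have hmod : f^[n % m] y = f^[n] y := by
        rw [← show minimalPeriod f y = m from hy, iterate_mod_minimalPeriod_eq]
      refine ⟨((m - n % m) % m, f^[n] y), ⟨Nat.mod_lt _ (by lia), hx⟩, ?_⟩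
      change f^[(m - n % m) % m] (f^[n] y) = y
      rw [← hS _ hx, iterate_mod_minimalPeriod_eq, hS _ hx, ← hmod,
        hreturn hy (Nat.mod_lt _ (by lia)).le]
  rw [← hbij.ncard_eq, Set.ncard_prod, Set.ncard_Iio_nat]

end PeriodicOrbits

section LyndonSequences

open Function

variable {α : Type*}

theorem iterate_stream_tail (n : ℕ) (s : Stream' α) : Stream'.tail^[n] s = s.drop n := by
  induction n generalizing s with
  | zero => rfl
  | succ n ih => rw [iterate_succ_apply, ih, Stream'.drop_tail']

theorem stream_take_add (m n : ℕ) (s : Stream' α) :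
    s.take (m + n) = s.take m ++ (s.drop m).take n := by
  induction m generalizing s with
  | zero => simp
  | succ m ih => rw [Nat.add_right_comm, Stream'.take_succ, ih, Stream'.take_succ,
      Stream'.drop_tail', List.cons_append]

theorem bijOn_stream_take {m : ℕ} (hm : m ≠ 0) :
    Set.BijOn (Stream'.take m) (ptsOfPeriod (Stream'.tail (α := α)) m) {w | w.length = m} := by
  refine ⟨fun s _ => s.length_take m, fun s hs t ht h => Stream'.ext fun n => ?_, ?_⟩
  · have hmod {s : Stream' α} (hs : s ∈ ptsOfPeriod Stream'.tail m) :
        (s.take m)[n % m]? = s.get n := by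
      have := hs.iterate_mod_apply n
      rw [iterate_stream_tail, iterate_stream_tail] at this
      rw [Stream'.getElem?_take (Nat.mod_lt n (Nat.pos_of_ne_zero hm)), ← Stream'.head_drop, this,
        Stream'.head_drop]
    exact Option.some_injective _ (by rw [← hmod hs, ← hmod ht, h])
  · rintro w rfl
    have hw : w ≠ [] := by simpa using hm
    refine ⟨Stream'.cycle w hw, ?_, ?_⟩
    · rw [mem_ptsOfPeriod, IsPeriodicPt, IsFixedPt, iterate_stream_tail]
      conv_lhs => rw [Stream'.cycle_eq, Stream'.drop_append_stream]
    · rw [Stream'.cycle_eq, Stream'.take_append_of_le_length (h := le_rfl), List.take_length]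

theorem ncard_ptsOfPeriod_tail [Fintype α] {m : ℕ} (hm : m ≠ 0) :
    (ptsOfPeriod (Stream'.tail (α := α)) m).ncard = Fintype.card α ^ m := by
  rw [(bijOn_stream_take hm).ncard_eq, ← card_vector, ← Nat.card_eq_fintype_card,
    ← Nat.card_coe_set_eq]
  rfl

variable [LinearOrder α] {m : ℕ} {s : Stream' α}

theorem isLyndon_take_iff_forall_lt (hm : m ≠ 0) (hs : IsPeriodicPt Stream'.tail m s) :
    IsLyndon (s.take m) ↔ ∀ p, 0 < p → p < m → s.take m < (s.drop p).take m := by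
  have hne {n : ℕ} (hn : 0 < n) (t : Stream' α) : t.take n ≠ [] := by
    rw [← List.length_pos_iff, Stream'.length_take]
    exact hn
  have hsplit {p : ℕ} (hp : p < m) : s.take m = s.take p ++ (s.drop p).take (m - p) := by
    rw [← stream_take_add, Nat.add_sub_cancel' hp.le]
  have hrotate {p : ℕ} (hp : p < m) :
      (s.drop p).take m = (s.drop p).take (m - p) ++ s.take p := by
    have hdrop : s.drop m = s := by rw [← iterate_stream_tail]; exact hs
    conv_lhs => rw [← Nat.sub_add_cancel hp.le, stream_take_add, Stream'.drop_drop,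
      Nat.add_sub_cancel' hp.le, hdrop]
  constructor
  · intro h p hp hpm
    rw [hsplit hpm] at h
    rw [hrotate hpm, hsplit hpm]
    exact h.append_lt_append_comm (hne hp _) (hne (Nat.sub_pos_of_lt hpm) _)
  · intro h
    refine .of_forall_lt_append_comm (hne (Nat.pos_of_ne_zero hm) s) fun u v hu hv huv => ?_
    have hlen : u.length < m := by
      rw [← s.length_take m, huv, List.length_append]
      exact Nat.lt_add_of_pos_right (List.length_pos_iff.2 hv)
    obtain ⟨hu_eq, rfl⟩ := List.append_inj (huv.symm.trans (hsplit hlen)) (by simp)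
    have := h _ (List.length_pos_iff.2 hu) hlen
    rwa [hrotate hlen, ← hu_eq] at this

theorem minimalPeriod_tail_of_isLyndon_take (hm : m ≠ 0) (hs : IsPeriodicPt Stream'.tail m s)
    (h : IsLyndon (s.take m)) : minimalPeriod Stream'.tail s = m := by
  have hpos : 0 < m := Nat.pos_of_ne_zero hm
  refine (hs.minimalPeriod_le hpos).antisymm (not_lt.1 fun hlt => ?_)
  have := (isLyndon_take_iff_forall_lt hm hs).1 h _ (hs.minimalPeriod_pos hpos) hlt
  rw [← iterate_stream_tail, iterate_minimalPeriod] at this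
  exact this.false

theorem isLyndon_take_iff_forall_le (hm : m ≠ 0) (hs : minimalPeriod Stream'.tail s = m) :
    IsLyndon (s.take m) ↔ ∀ n, s.take m ≤ (s.drop n).take m := by
  have hper : IsPeriodicPt Stream'.tail m s := hs ▸ isPeriodicPt_minimalPeriod _ _
  rw [isLyndon_take_iff_forall_lt hm hper]
  refine ⟨fun h n => ?_, fun h p hp hpm => (h p).lt_of_ne fun heq => ?_⟩
  · rw [← iterate_stream_tail, ← hper.iterate_mod_apply, iterate_stream_tail]
    obtain h0 | hpos := (n % m).eq_zero_or_pos
    · rw [h0, Stream'.drop_zero]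
    · exact (h _ hpos (Nat.mod_lt n (Nat.pos_of_ne_zero hm))).le
  · have hfix : IsPeriodicPt Stream'.tail p s :=
      ((bijOn_stream_take hm).injOn hper (hper.apply_iterate p)
        (by rwa [iterate_stream_tail])).symm
    exact (hfix.minimalPeriod_le hp).not_gt (hs ▸ hpm)

theorem existsUnique_isLyndon_take (hm : m ≠ 0) (hs : minimalPeriod Stream'.tail s = m) :
    ∃! t, (t ∈ ptsOfPeriod Stream'.tail m ∧ IsLyndon (t.take m)) ∧
      ∃ n, Stream'.tail^[n] s = t := by
  have hper : IsPeriodicPt Stream'.tail m s := hs ▸ isPeriodicPt_minimalPeriod _ _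
  have hpos : 0 < m := Nat.pos_of_ne_zero hm
  have hdrop (n : ℕ) : minimalPeriod Stream'.tail (s.drop n) = m := by
    rw [← iterate_stream_tail, minimalPeriod_apply_iterate (mk_mem_periodicPts hpos hper), hs]
  have hdrop_per (n : ℕ) : s.drop n ∈ ptsOfPeriod Stream'.tail m := by
    rw [← iterate_stream_tail]
    exact hper.apply_iterate n
  obtain ⟨p, -, hmin⟩ := (Finset.range m).exists_min_image (fun n => (s.drop n).take m)
    ⟨0, Finset.mem_range.2 hpos⟩
  have hle (n : ℕ) : (s.drop p).take m ≤ (s.drop n).take m := by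
    rw [← iterate_stream_tail n, ← hper.iterate_mod_apply, iterate_stream_tail]
    exact hmin _ (Finset.mem_range.2 (Nat.mod_lt n hpos))
  refine ⟨s.drop p, ⟨⟨hdrop_per p, (isLyndon_take_iff_forall_le hm (hdrop p)).2 fun n => ?_⟩,
    p, iterate_stream_tail p s⟩, ?_⟩
  · rw [Stream'.drop_drop]
    exact hle _
  · rintro _ ⟨⟨-, ht⟩, n, rfl⟩
    rw [iterate_stream_tail] at ht ⊢
    have hreturn : (s.drop n).drop (n * m - n + p) = s.drop p := by
      rw [Stream'.drop_drop, show n + (n * m - n + p) = p + n * m by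
        have := Nat.le_mul_of_pos_right n hpos; lia, ← iterate_stream_tail, iterate_add_apply,
        (hper.const_mul n).eq, iterate_stream_tail]
    have hge := (isLyndon_take_iff_forall_le hm (hdrop n)).1 ht (n * m - n + p)
    rw [hreturn] at hge
    exact (bijOn_stream_take hm).injOn (hdrop_per n) (hdrop_per p) (hge.antisymm (hle n))

theorem ncard_minimalPeriod_tail (hm : m ≠ 0) :
    {s : Stream' α | minimalPeriod Stream'.tail s = m}.ncard = m * (lyndonWords α m).ncard := by
  have hbij : Set.BijOn (Stream'.take m)
      {t : Stream' α | t ∈ ptsOfPeriod Stream'.tail m ∧ IsLyndon (t.take m)} (lyndonWords α m) := by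
    have htake := bijOn_stream_take (α := α) hm
    refine ⟨fun t ht => ⟨t.length_take m, ht.2⟩, htake.injOn.mono fun t ht => ht.1, ?_⟩
    rintro w ⟨hlen, hw⟩
    obtain ⟨t, ht, rfl⟩ := htake.surjOn hlen
    exact ⟨t, ⟨ht, hw⟩, rfl⟩
  rw [← hbij.ncard_eq]
  exact ncard_minimalPeriod_eq_mul hm
    (fun t ht => minimalPeriod_tail_of_isLyndon_take hm ht.1 ht.2)
    fun s hs => existsUnique_isLyndon_take hm hs

theorem sum_divisors_mul_ncard_lyndonWords [Fintype α] {k : ℕ} (hk : k ≠ 0) :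
    ∑ m ∈ k.divisors, m * (lyndonWords α m).ncard = Fintype.card α ^ k := by
  have hfin : (ptsOfPeriod (Stream'.tail (α := α)) k).Finite :=
    (bijOn_stream_take hk).finite_iff_finite.2 (List.finite_length_eq α k)
  rw [← ncard_ptsOfPeriod_tail hk, ncard_ptsOfPeriod hk hfin]
  exact Finset.sum_congr rfl fun m hm =>
    (ncard_minimalPeriod_tail (Nat.pos_of_mem_divisors hm).ne').symm

end LyndonSequences

section WittFormula

theorem mul_ncard_lyndonWords (X : Type*) [Fintype X] [LinearOrder X] {k : ℕ} (hk : k ≠ 0) :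
    (k : ℤ) * (lyndonWords X k).ncard =
      ∑ n ∈ k.divisors, ArithmeticFunction.moebius n * (Fintype.card X : ℤ) ^ (k / n) := by
  have h := (ArithmeticFunction.sum_eq_iff_sum_mul_moebius_eq
    (f := fun m => (m : ℤ) * (lyndonWords X m).ncard)
    (g := fun m => (Fintype.card X : ℤ) ^ m)).1
    (fun n hn => mod_cast sum_divisors_mul_ncard_lyndonWords hn.ne') k (Nat.pos_of_ne_zero hk)
  rw [← h, ← Nat.sum_divisorsAntidiagonal
    fun i j => ArithmeticFunction.moebius i * (Fintype.card X : ℤ) ^ j]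
  simp only [Int.cast_id]

theorem witt_formula_general (R : Type*) [CommRing R] [Nontrivial R] [Algebra ℚ R]
    (X : Type*) [Fintype X] (k : ℕ) (hk : 1 ≤ k) :
    (Module.finrank R (lieLayer R X k) : ℤ) * (k : ℤ) =
      ∑ n ∈ k.divisors, ArithmeticFunction.moebius n * (Fintype.card X : ℤ) ^ (k / n) := by
  let _ : LinearOrder X := LinearOrder.lift' (Fintype.equivFin X) (Fintype.equivFin X).injective
  have hk0 : k ≠ 0 := Nat.one_le_iff_ne_zero.1 hk
  rw [finrank_lieLayer hk0, mul_comm, mul_ncard_lyndonWords X hk0]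

end WittFormula

/-- Witt's formula: the dimension of the degree-`k` homogeneous layer of the free
Lie algebra on `d` generators is `(1/k) Σ_{n ∣ k} μ(n) d^{k/n}`. -/
theorem witt_formula (d k : ℕ) (hk : 1 ≤ k) :
    (Module.finrank ℝ (freeLieLayer d k) : ℤ) * (k : ℤ) =
      ∑ n ∈ k.divisors, ArithmeticFunction.moebius n * (d : ℤ) ^ (k / n) := by
  rw [freeLieLayer_eq_lieLayer]
  simpa using witt_formula_general ℝ (Fin d) k hk
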